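/- arXiv:math/0305158 — 6 statements merged into one kernel-verified Lean document; each statement's English description precedes it below -/
import Mathlib

section
/- Let n ≥ 1, let f : Sⁿ → Sⁿ be a continuous map, and suppose there are points p, q ∈ Sⁿ such that f⁻¹({p}) = {q} (the point p has exactly one preimage under f). Then there exists a continuous injective map g : Sⁿ → Sⁿ × ℝⁿ such that Prod.fst ∘ g = f and g(q) = (p, 0). (Since Sⁿ is compact, such a g is automatically a topological embedding.) -/
/-! A stereographic projection followed by the homeomorphism of `ℝⁿ` with its unit ball gives a
bounded embedding `β` of `Sⁿ ∖ {q}` into `ℝⁿ`. The map `x ↦ (f x, dist (f x) p • β x)` is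
continuous at `q` because the factor `dist (f x) p` tends to zero there, and it is injective because
equal first coordinates force equal, nonzero factors away from `q`, so that `β` separates points. -/

open Filter Function Set Topology

theorem continuous_smul_of_continuousOn_support {X 𝕜 E : Type*} [TopologicalSpace X]
    [NormedField 𝕜] [SeminormedAddCommGroup E] [NormedSpace 𝕜 E] {φ : X → 𝕜} {β : X → E}
    (hφ : Continuous φ) (hβ : ContinuousOn β (support φ))
    (hbounded : ∀ x, φ x = 0 → (𝓝 x).IsBoundedUnder (· ≤ ·) (norm ∘ β)) :
    Continuous fun x => φ x • β x := by
  refine continuous_iff_continuousAt.mpr fun x => ?_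
  by_cases hx : φ x = 0
  · have hzero : Tendsto φ (𝓝 x) (𝓝 0) := hx ▸ hφ.tendsto x
    simpa only [ContinuousAt, hx, zero_smul] using hzero.zero_smul_isBoundedUnder_le (hbounded x hx)
  · exact hφ.continuousAt.smul (hβ.continuousAt (hφ.isOpen_support.mem_nhds hx))

theorem injective_prodMk_smul {X Y 𝕜 E : Type*} [GroupWithZero 𝕜] [MulAction 𝕜 E] {f : X → Y}
    {ρ : Y → 𝕜} {β : X → E} (hf : InjOn f {x | ρ (f x) = 0})
    (hβ : InjOn β {x | ρ (f x) ≠ 0}) :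
    Injective fun x => (f x, ρ (f x) • β x) := by
  intro x y hxy
  obtain ⟨hfxy, hsmul⟩ := Prod.mk.inj hxy
  have hρ : ρ (f x) = ρ (f y) := congrArg ρ hfxy
  by_cases hx : ρ (f x) = 0
  · exact hf hx (hρ.symm.trans hx) hfxy
  · have hy : ρ (f y) ≠ 0 := hρ ▸ hx
    rw [← hρ] at hsmul
    exact hβ hx hy ((IsUnit.mk0 _ hx).smul_left_cancel.mp hsmul)

theorem map_with_single_preimage_lifts_to_embedding_general {X Y E : Type*} [TopologicalSpace X]
    [MetricSpace Y] [SeminormedAddCommGroup E] [NormedSpace ℝ E] {f : X → Y} (hf : Continuous f)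
    {p : Y} {q : X} (hpq : f ⁻¹' {p} = {q}) {β : X → E} (hβ : ContinuousOn β {q}ᶜ)
    (hinj : InjOn β {q}ᶜ) :
    ∃ g : X → Y × E, Continuous g ∧ Injective g ∧ (∀ x, (g x).1 = f x) ∧ g q = (p, 0) := by
  let γ : X → E := fun x => Homeomorph.unitBall (β x)
  have hγ : ContinuousOn γ {q}ᶜ :=
    (continuous_subtype_val.comp Homeomorph.unitBall.continuous).comp_continuousOn hβ
  have hγinj : InjOn γ {q}ᶜ :=
    (Subtype.val_injective.comp Homeomorph.unitBall.injective).comp_injOn hinj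
  have hγbounded (x : X) : ‖γ x‖ ≤ 1 := (mem_ball_zero_iff.mp (Homeomorph.unitBall (β x)).2).le
  have hzero : {x | dist (f x) p = 0} = {q} := by
    simp only [dist_eq_zero, ← hpq, preimage, mem_singleton_iff]
  have hsupport : {x | dist (f x) p ≠ 0} = {q}ᶜ := congrArg compl hzero
  refine ⟨fun x => (f x, dist (f x) p • γ x), hf.prodMk ?_, ?_, fun _ => rfl, ?_⟩
  · exact continuous_smul_of_continuousOn_support (hf.dist continuous_const)
      (hγ.mono hsupport.subset) fun _ _ => isBoundedUnder_of ⟨1, hγbounded⟩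
  · exact injective_prodMk_smul (ρ := fun y => dist y p) (hzero ▸ injOn_singleton f q)
      (hsupport ▸ hγinj)
  · have hq : f q = p := hpq.superset rfl
    simp [hq]

/-- Example 2: if some point p ∈ Sⁿ has exactly one preimage q under a
continuous map f : Sⁿ → Sⁿ, then f lifts to an embedding g : Sⁿ → Sⁿ × ℝⁿ with
g(q) = (p, 0). -/
theorem map_with_single_preimage_lifts_to_embedding (n : ℕ) (hn : 1 ≤ n)
    (f : Metric.sphere (0 : EuclideanSpace ℝ (Fin (n + 1))) 1 →
         Metric.sphere (0 : EuclideanSpace ℝ (Fin (n + 1))) 1)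
    (hf : Continuous f)
    (p q : Metric.sphere (0 : EuclideanSpace ℝ (Fin (n + 1))) 1)
    (hpq : f ⁻¹' {p} = {q}) :
    ∃ g : Metric.sphere (0 : EuclideanSpace ℝ (Fin (n + 1))) 1 →
        Metric.sphere (0 : EuclideanSpace ℝ (Fin (n + 1))) 1 × EuclideanSpace ℝ (Fin n),
      Continuous g ∧ Function.Injective g ∧
      (∀ x, (g x).1 = f x) ∧ g q = (p, 0) := by
  have := Fact.mk (finrank_euclideanSpace_fin (𝕜 := ℝ) (n := n + 1))
  have hsource := stereographic'_source (n := n) q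
  exact map_with_single_preimage_lifts_to_embedding_general hf hpq
    (hsource ▸ (stereographic' n q).continuousOn) (hsource ▸ (stereographic' n q).injOn)
end

section
/- Let n ≥ 1. Every continuous map f : Sⁿ → ℝⁿ is realizable in ℝ^{2n}: for every ε > 0 there exists a continuous injective map g : Sⁿ → ℝⁿ × ℝⁿ such that dist(g(x), (f(x), 0)) < ε for all x ∈ Sⁿ. (Since Sⁿ is compact, such a g is automatically a topological embedding.) -/
/-!
Fix a nonzero linear functional `ℓ` on the target and let `p` maximize `ℓ ∘ f`. Truncating `ℓ ∘ f`
slightly below its maximum and adding a small bump near `p` moves `f` by little and separates the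
values on a small cap around `p` from all other values. It remains to find a map from the sphere to
the second factor that is injective on the cap and injective on its complement, and to scale it
down: stereographic projection from `p` outside the cap, continued by orthogonal projection inside.
-/

open Function Metric Set Topology
open scoped InnerProductSpace

section Perturbation

variable {X F G : Type*} [TopologicalSpace X]

/-- The map `f` is realizable in `F × G`: the map `x ↦ (f x, 0)` is a uniform limit of continuous
injections, that is, of embeddings when `X` is compact and `F × G` is Hausdorff. The product carries
the sup distance, which is equivalent to the Euclidean one. -/
def IsRealizable [PseudoMetricSpace F] (G : Type*) [PseudoMetricSpace G] [Zero G] (f : X → F) :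
    Prop :=
  ∀ ε > 0, ∃ g : X → F × G, Continuous g ∧ Injective g ∧ ∀ x, dist (g x) (f x, 0) < ε

/-- The space `X` can be mapped to `G` injectively in two pieces, one of them arbitrarily small:
every neighbourhood of every point contains a set `{0 < u}` such that some continuous map to `G` is
injective on `{0 < u}` and on its complement. The images of the two pieces may overlap. -/
def HasTwoSheetedMaps (X G : Type*) [TopologicalSpace X] [TopologicalSpace G] : Prop :=
  ∀ p : X, ∀ U ∈ 𝓝 p, ∃ (u : X → ℝ) (h : X → G), Continuous u ∧ Continuous h ∧
    {x | 0 < u x} ⊆ U ∧ InjOn h {x | 0 < u x} ∧ InjOn h {x | u x ≤ 0}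

theorem exists_real_perturbation_separating {φ : X → ℝ} (hφ : Continuous φ) {p : X}
    (hp : ∀ x, φ x ≤ φ p) {ε : ℝ} (hε : 0 < ε) :
    ∃ U ∈ 𝓝 p, ∀ u : X → ℝ, Continuous u → {x | 0 < u x} ⊆ U →
      ∃ ψ : X → ℝ, Continuous ψ ∧ (∀ x, |ψ x - φ x| ≤ ε) ∧
        ∀ x y, 0 < u x → u y ≤ 0 → ψ y < ψ x := by
  refine ⟨{x | φ p - ε < φ x}, (isOpen_lt (by fun_prop) hφ).mem_nhds (by simpa using hε),
    fun u hu hU => ⟨fun x => min (φ x) (φ p - ε) + min (max (u x) 0) ε, by fun_prop,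
      fun x => ?_, fun x y hx hy => ?_⟩⟩
  · have hflatten : φ x - ε ≤ min (φ x) (φ p - ε) := le_min (by linarith) (by linarith [hp x])
    have hbump_nonneg : 0 ≤ min (max (u x) 0) ε := le_min (le_max_right _ _) hε.le
    rw [abs_le]
    constructor <;> linarith [min_le_left (φ x) (φ p - ε), min_le_right (max (u x) 0) ε]
  · have hflat : min (φ x) (φ p - ε) = φ p - ε := min_eq_right (hU hx).le
    have hbump : 0 < min (max (u x) 0) ε := lt_min (lt_max_of_lt_left hx) hε
    have hnobump : min (max (u y) 0) ε = 0 := by rw [max_eq_right hy, min_eq_left hε.le]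
    dsimp only
    linarith [min_le_right (φ y) (φ p - ε)]

variable [NormedAddCommGroup F] [NormedSpace ℝ F] [NormedAddCommGroup G] [NormedSpace ℝ G]

theorem exists_perturbation_separating [Nontrivial F] [CompactSpace X] [Nonempty X] {f : X → F}
    (hf : Continuous f) {ε : ℝ} (hε : 0 < ε) :
    ∃ p : X, ∃ U ∈ 𝓝 p, ∀ u : X → ℝ, Continuous u → {x | 0 < u x} ⊆ U →
      ∃ f' : X → F, Continuous f' ∧ (∀ x, dist (f' x) (f x) ≤ ε) ∧
        ∀ x y, 0 < u x → u y ≤ 0 → f' x ≠ f' y := by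
  obtain ⟨v, hv⟩ := exists_norm_eq F zero_le_one
  obtain ⟨ℓ, -, hℓ⟩ := exists_dual_vector'' ℝ v
  replace hℓ : ℓ v = 1 := by simpa [hv] using hℓ
  have hℓf : Continuous fun x => ℓ (f x) := by fun_prop
  obtain ⟨p, -, hp⟩ := isCompact_univ.exists_isMaxOn univ_nonempty hℓf.continuousOn
  obtain ⟨U, hU, hsep⟩ := exists_real_perturbation_separating hℓf (fun x => hp (mem_univ x)) hε
  refine ⟨p, U, hU, fun u hu huU => ?_⟩
  obtain ⟨ψ, hψ, hclose, hlt⟩ := hsep u hu huU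
  refine ⟨fun x => f x + (ψ x - ℓ (f x)) • v, by fun_prop, fun x => ?_, fun x y hx hy hxy => ?_⟩
  · simpa [dist_eq_norm, norm_smul, hv] using hclose x
  · have hψxy : ψ x = ψ y := by simpa [hℓ] using congrArg ℓ hxy
    exact (hlt x y hx hy).ne' hψxy

theorem exists_pos_forall_norm_smul_lt [CompactSpace X] {h : X → G} (hh : Continuous h) {ε : ℝ}
    (hε : 0 < ε) : ∃ k : ℝ, 0 < k ∧ ∀ x, ‖k • h x‖ < ε := by
  obtain ⟨C, hC⟩ := isCompact_univ.exists_bound_of_continuousOn hh.continuousOn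
  refine ⟨ε / (|C| + 1), by positivity, fun x => ?_⟩
  have hCx : ‖h x‖ < |C| + 1 := by linarith [hC x (mem_univ x), le_abs_self C]
  calc ‖(ε / (|C| + 1)) • h x‖ = ε / (|C| + 1) * ‖h x‖ := by
        rw [norm_smul, Real.norm_of_nonneg (by positivity)]
    _ < ε / (|C| + 1) * (|C| + 1) := by gcongr
    _ = ε := by field_simp

theorem HasTwoSheetedMaps.isRealizable [Nontrivial F] [CompactSpace X]
    (hX : HasTwoSheetedMaps X G) {f : X → F} (hf : Continuous f) : IsRealizable G f := by
  intro ε hε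
  cases isEmpty_or_nonempty X
  · exact ⟨isEmptyElim, continuous_of_const isEmptyElim, injective_of_subsingleton _, isEmptyElim⟩
  obtain ⟨p, U, hU, hpert⟩ := exists_perturbation_separating hf (half_pos hε)
  obtain ⟨u, h, hu, hh, huU, hinj_pos, hinj_nonpos⟩ := hX p U hU
  obtain ⟨f', hf', hclose, hsep⟩ := hpert u hu huU
  obtain ⟨k, hk, hsmall⟩ := exists_pos_forall_norm_smul_lt hh hε
  refine ⟨fun x => (f' x, k • h x), by fun_prop, fun x y hxy => ?_, fun x => ?_⟩
  · obtain ⟨hf'xy, hkxy⟩ := Prod.mk.inj hxy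
    have hhxy : h x = h y := smul_right_injective G hk.ne' hkxy
    rcases lt_or_ge 0 (u x) with hx | hx <;> rcases lt_or_ge 0 (u y) with hy | hy
    · exact hinj_pos hx hy hhxy
    · exact absurd hf'xy (hsep x y hx hy)
    · exact absurd hf'xy.symm (hsep y x hy hx)
    · exact hinj_nonpos hx hy hhxy
  · rw [Prod.dist_eq, dist_zero_right]
    exact max_lt ((hclose x).trans_lt (half_lt_self hε)) (hsmall x)

end Perturbation

section Sphere

variable {E : Type*} [NormedAddCommGroup E] [InnerProductSpace ℝ E]

/-- Stereographic projection from `v`, with its scaling factor frozen at height `c`: on the part of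
the unit sphere above that height it is a multiple of the orthogonal projection along `v`. -/
noncomputable def cappedStereo (v : E) (c : ℝ) (x : E) : (ℝ ∙ v)ᗮ :=
  (2 / (1 - min ⟪v, x⟫_ℝ c)) • (ℝ ∙ v)ᗮ.orthogonalProjectionOnto x

theorem continuous_cappedStereo (v : E) {c : ℝ} (hc : c < 1) : Continuous (cappedStereo v c) := by
  have hden : ∀ x, 1 - min ⟪v, x⟫_ℝ c ≠ 0 := fun x => by linarith [min_le_right ⟪v, x⟫_ℝ c]
  unfold cappedStereo
  fun_prop (disch := exact hden _)

theorem cappedStereo_eq_stereoToFun {v x : E} {c : ℝ} (hx : ⟪v, x⟫_ℝ ≤ c) :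
    cappedStereo v c x = stereoToFun v x := by
  rw [cappedStereo, min_eq_left hx, stereoToFun_apply, innerSL_apply_apply]

theorem injOn_cappedStereo_of_inner_le {v : E} (hv : ‖v‖ = 1) {c : ℝ} (hc : c < 1) :
    InjOn (fun x : sphere (0 : E) 1 => cappedStereo v c x) {x | ⟪v, (x : E)⟫_ℝ ≤ c} := by
  have hsource : {x : sphere (0 : E) 1 | ⟪v, (x : E)⟫_ℝ ≤ c} ⊆ (stereographic hv).source := by
    rintro x (hx : ⟪v, (x : E)⟫_ℝ ≤ c) rfl
    rw [real_inner_self_eq_norm_sq, hv, one_pow] at hx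
    linarith
  refine ((stereographic hv).injOn.mono hsource).congr fun x hx => ?_
  exact (cappedStereo_eq_stereoToFun hx).symm

theorem injOn_orthogonalProjectionOnto_orthogonal_span_singleton (v : E) (r : ℝ) :
    InjOn (ℝ ∙ v)ᗮ.orthogonalProjectionOnto {x | ‖x‖ = r ∧ 0 ≤ ⟪v, x⟫_ℝ} := by
  rintro x ⟨hxr, hx⟩ y ⟨hyr, hy⟩ hxy
  obtain ⟨t, ht⟩ : ∃ t : ℝ, t • v = x - y := by
    rw [← sub_eq_zero, ← map_sub, Submodule.orthogonalProjectionOnto_eq_zero_iff,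
      Submodule.orthogonal_orthogonal] at hxy
    exact Submodule.mem_span_singleton.mp hxy
  have hperp : t * (⟪v, x⟫_ℝ + ⟪v, y⟫_ℝ) = 0 := by
    rw [← inner_add_right, ← real_inner_smul_left, ht, real_inner_comm]
    exact (real_inner_add_sub_eq_zero_iff x y).mpr (hxr.trans hyr.symm)
  rw [← sub_eq_zero, ← ht]
  rcases mul_eq_zero.mp hperp with rfl | hsum
  · exact zero_smul ℝ v
  · have hinner : ⟪v, x - y⟫_ℝ = 0 := by rw [inner_sub_right]; linarith
    rw [← inner_self_eq_zero (𝕜 := ℝ), real_inner_smul_left, ht, hinner, mul_zero]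

theorem injOn_cappedStereo_of_le_inner (v : E) {c : ℝ} (hc₀ : 0 ≤ c) (hc₁ : c < 1) :
    InjOn (fun x : sphere (0 : E) 1 => cappedStereo v c x) {x | c ≤ ⟪v, (x : E)⟫_ℝ} := by
  intro x (hx : c ≤ ⟪v, (x : E)⟫_ℝ) y (hy : c ≤ ⟪v, (y : E)⟫_ℝ) hxy
  have hscale : 2 / (1 - c) ≠ 0 := div_ne_zero two_ne_zero (by linarith)
  simp only [cappedStereo, min_eq_right hx, min_eq_right hy] at hxy
  exact Subtype.ext <| injOn_orthogonalProjectionOnto_orthogonal_span_singleton v 1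
    ⟨norm_eq_of_mem_sphere x, hc₀.trans hx⟩ ⟨norm_eq_of_mem_sphere y, hc₀.trans hy⟩
    (smul_right_injective _ hscale hxy)

theorem exists_cap_subset_of_mem_nhds {p : sphere (0 : E) 1} {U : Set (sphere (0 : E) 1)}
    (hU : U ∈ 𝓝 p) :
    ∃ c : ℝ, 0 ≤ c ∧ c < 1 ∧ {x : sphere (0 : E) 1 | c < ⟪(p : E), x⟫_ℝ} ⊆ U := by
  obtain ⟨r, hr, hball⟩ := Metric.mem_nhds_iff.mp hU
  have hr2 : 0 < r ^ 2 := by positivity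
  refine ⟨max 0 (1 - r ^ 2 / 2), le_max_left _ _, max_lt one_pos (by linarith),
    fun x hx => hball ?_⟩
  have hdist : dist x p ^ 2 = 2 - 2 * ⟪(p : E), x⟫_ℝ := by
    rw [Subtype.dist_eq, dist_eq_norm, norm_sub_sq_real, norm_eq_of_mem_sphere,
      norm_eq_of_mem_sphere, real_inner_comm]
    ring
  have hheight : 1 - r ^ 2 / 2 < ⟪(p : E), x⟫_ℝ := (le_max_right _ _).trans_lt hx
  exact lt_of_pow_lt_pow_left₀ 2 hr.le (by linarith)

variable [FiniteDimensional ℝ E] {G : Type*} [NormedAddCommGroup G] [NormedSpace ℝ G]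
  [FiniteDimensional ℝ G]

open Module in
theorem exists_injective_continuousLinearMap_orthogonal_span_singleton
    (hEG : finrank ℝ E ≤ finrank ℝ G + 1) {v : E} (hv : v ≠ 0) :
    ∃ T : (ℝ ∙ v)ᗮ →L[ℝ] G, Injective T := by
  have hsum := (ℝ ∙ v).finrank_add_finrank_orthogonal
  rw [finrank_span_singleton hv] at hsum
  obtain ⟨T, hT⟩ := finrank_le_iff_exists_linearMap.mp
    (show finrank ℝ (ℝ ∙ v)ᗮ ≤ finrank ℝ G by lia)
  exact ⟨T.toContinuousLinearMap, hT⟩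

open Module in
theorem hasTwoSheetedMaps_sphere (hEG : finrank ℝ E ≤ finrank ℝ G + 1) :
    HasTwoSheetedMaps (sphere (0 : E) 1) G := by
  intro p U hU
  have hp : ‖(p : E)‖ = 1 := norm_eq_of_mem_sphere p
  obtain ⟨c, hc₀, hc₁, hcap⟩ := exists_cap_subset_of_mem_nhds hU
  obtain ⟨T, hT⟩ := exists_injective_continuousLinearMap_orthogonal_span_singleton hEG
    (ne_zero_of_mem_unit_sphere p)
  have hcont : Continuous fun x : sphere (0 : E) 1 => T (cappedStereo (p : E) c x) :=
    T.continuous.comp ((continuous_cappedStereo (p : E) hc₁).comp continuous_subtype_val)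
  refine ⟨fun x => ⟪(p : E), x⟫_ℝ - c, fun x => T (cappedStereo (p : E) c x), by fun_prop, hcont,
    ?_, ?_, ?_⟩
  · simpa only [sub_pos] using hcap
  · simp only [sub_pos]
    exact hT.comp_injOn <|
      (injOn_cappedStereo_of_le_inner (p : E) hc₀ hc₁).mono fun _ => le_of_lt (α := ℝ)
  · simp only [sub_nonpos]
    exact hT.comp_injOn (injOn_cappedStereo_of_inner_le hp hc₁)

theorem map_sphere_to_euclidean_realizable_general {F : Type*} [NormedAddCommGroup F]
    [NormedSpace ℝ F] [Nontrivial F] (hEG : Module.finrank ℝ E ≤ Module.finrank ℝ G + 1)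
    {f : sphere (0 : E) 1 → F} (hf : Continuous f) : IsRealizable G f :=
  (hasTwoSheetedMaps_sphere hEG).isRealizable hf

end Sphere

/-- Example 2, first claim: every continuous map f : Sⁿ → ℝⁿ is realizable
in ℝ^{2n} = ℝⁿ × ℝⁿ: the map x ↦ (f(x), 0) is approximable by (topological) embeddings. -/
theorem map_sphere_to_euclidean_realizable (n : ℕ) (hn : 1 ≤ n)
    (f : Metric.sphere (0 : EuclideanSpace ℝ (Fin (n + 1))) 1 → EuclideanSpace ℝ (Fin n))
    (hf : Continuous f) (ε : ℝ) (hε : 0 < ε) :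
    ∃ g : Metric.sphere (0 : EuclideanSpace ℝ (Fin (n + 1))) 1 →
        EuclideanSpace ℝ (Fin n) × EuclideanSpace ℝ (Fin n),
      Continuous g ∧ Function.Injective g ∧
      ∀ x, dist (g x) ((f x, (0 : EuclideanSpace ℝ (Fin n)))) < ε := by
  have : NeZero n := ⟨by lia⟩
  exact map_sphere_to_euclidean_realizable_general (by simp) hf ε hε
end

section
/- Let f, g : [0,1] → [0,1] be continuous maps with f(0) = 0, g(0) = 0, f(1) = 1 and g(1) = 1. Then the points (0,0) and (1,1) belong to the same connected component of the set { (x,y) ∈ [0,1] × [0,1] : f(x) = g(y) }, taken with the subspace topology of [0,1] × [0,1]. -/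
open unitInterval

/-!
The set `{f ≤ g}` contains the left and top edges of the square and `{g ≤ f}` the bottom and right
edges, so each of these two closed sets joins `(0, 0)` to `(1, 1)` by a connected set. In a simply
connected space `X` this forces the two corners into one component of the intersection: otherwise
some continuous `u : X → ℝ` takes only the values `0` and `1` on the intersection and separates the
corners. Modulo `1` the constant `0` on `{f ≤ g}` and `u` on `{g ≤ f}` agree where both are defined,
and the resulting map to the circle lifts to some `F : X → ℝ`. Both `F` on `{f ≤ g}` and `F - u` on
`{g ≤ f}` are integer valued, so neither changes from one corner to the other, and neither does `u`.
-/

open Set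

section General

variable {X Y Z : Type*} [TopologicalSpace X] [TopologicalSpace Y] [TopologicalSpace Z]

theorem exists_isClosed_disjoint_union_eq_of_notMem_connectedComponentIn [T2Space X] {K : Set X}
    (hK : IsCompact K) {a b : X} (ha : a ∈ K) (hb : b ∈ K) (hab : b ∉ connectedComponentIn K a) :
    ∃ P Q : Set X, IsClosed P ∧ IsClosed Q ∧ Disjoint P Q ∧ P ∪ Q = K ∧ a ∈ P ∧ b ∈ Q := by
  have : CompactSpace K := isCompact_iff_compactSpace.mp hK
  have hb' : (⟨b, hb⟩ : K) ∉ connectedComponent (⟨a, ha⟩ : K) := fun h ↦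
    hab (connectedComponentIn_eq_image ha ▸ mem_image_of_mem _ h)
  simp only [connectedComponent_eq_iInter_isClopen, mem_iInter, Subtype.forall, not_forall] at hb'
  obtain ⟨U, ⟨hU, haU⟩, hbU⟩ := hb'
  have closed_val := hK.isClosed.isClosedEmbedding_subtypeVal.isClosedMap
  refine ⟨(↑) '' U, (↑) '' Uᶜ, closed_val U hU.isClosed, closed_val Uᶜ hU.compl.isClosed,
    (disjoint_image_iff Subtype.val_injective).mpr disjoint_compl_right, ?_,
    ⟨_, haU, rfl⟩, ⟨_, hbU, rfl⟩⟩
  rw [← image_union, union_compl_self, image_univ, Subtype.range_coe]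

theorem exists_continuous_zero_or_one_of_notMem_connectedComponentIn [T2Space X] [NormalSpace X]
    {K : Set X} (hK : IsCompact K) {a b : X} (ha : a ∈ K) (hb : b ∈ K)
    (hab : b ∉ connectedComponentIn K a) :
    ∃ u : C(X, ℝ), u a = 0 ∧ u b = 1 ∧ ∀ x ∈ K, u x = 0 ∨ u x = 1 := by
  obtain ⟨P, Q, hP, hQ, hPQ, rfl, haP, hbQ⟩ :=
    exists_isClosed_disjoint_union_eq_of_notMem_connectedComponentIn hK ha hb hab
  obtain ⟨u, hu₀, hu₁, -⟩ := exists_continuous_zero_one_of_isClosed hP hQ hPQ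
  exact ⟨u, hu₀ haP, hu₁ hbQ, fun x hx ↦ hx.imp (@hu₀ x) (@hu₁ x)⟩

theorem exists_continuousMap_eqOn_of_isClosed {A B : Set X} (hA : IsClosed A) (hB : IsClosed B)
    (hAB : A ∪ B = univ) {v w : C(X, Y)} (hvw : EqOn v w (A ∩ B)) :
    ∃ φ : C(X, Y), EqOn φ v A ∧ EqOn φ w B := by
  classical
  have eqOn_A : EqOn (A.piecewise v w) v A := A.piecewise_eqOn v w
  have eqOn_B : EqOn (A.piecewise v w) w B := fun x hxB ↦ by
    by_cases hxA : x ∈ A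
    · exact (eqOn_A hxA).trans (hvw ⟨hxA, hxB⟩)
    · exact piecewise_eq_of_notMem A v w hxA
  have cont : ContinuousOn (A.piecewise v w) (A ∪ B) :=
    (v.continuous.continuousOn.congr eqOn_A).union_of_isClosed
      (w.continuous.continuousOn.congr eqOn_B) hA hB
  exact ⟨⟨A.piecewise v w, continuousOn_univ.mp (hAB ▸ cont)⟩, eqOn_A, eqOn_B⟩

theorem exists_continuousMap_comp_eqOn_of_isCoveringMap [SimplyConnectedSpace X]
    [LocallyPathConnectedSpace X] {p : Y → Z} (hp : IsCoveringMap p) {A B : Set X}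
    (hA : IsClosed A) (hB : IsClosed B) (hAB : A ∪ B = univ) {v w : C(X, Y)}
    (hvw : EqOn (p ∘ v) (p ∘ w) (A ∩ B)) :
    ∃ F : C(X, Y), EqOn (p ∘ F) (p ∘ v) A ∧ EqOn (p ∘ F) (p ∘ w) B := by
  let q : C(Y, Z) := ⟨p, hp.continuous⟩
  obtain ⟨φ, φ_A, φ_B⟩ := exists_continuousMap_eqOn_of_isClosed (v := q.comp v) (w := q.comp w)
    hA hB hAB hvw
  obtain ⟨x₀⟩ : Nonempty X := inferInstance
  obtain ⟨y₀, hy₀⟩ : ∃ y₀, p y₀ = φ x₀ := by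
    rcases hAB ▸ mem_univ x₀ with hx₀ | hx₀
    exacts [⟨v x₀, (φ_A hx₀).symm⟩, ⟨w x₀, (φ_B hx₀).symm⟩]
  obtain ⟨F, ⟨-, F_lifts⟩, -⟩ := hp.existsUnique_continuousMap_lifts φ x₀ y₀ hy₀
  exact ⟨F, F_lifts ▸ φ_A, F_lifts ▸ φ_B⟩

theorem mem_connectedComponentIn_inter_of_isPreconnected [T2Space X] [NormalSpace X]
    [SimplyConnectedSpace X] [LocallyPathConnectedSpace X] {A B S T : Set X} (hA : IsClosed A)
    (hB : IsClosed B) (hAB : A ∪ B = univ) (hK : IsCompact (A ∩ B)) (hS : IsPreconnected S)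
    (hSA : S ⊆ A) (hT : IsPreconnected T) (hTB : T ⊆ B) {a b : X} (ha : a ∈ S ∩ T)
    (hb : b ∈ S ∩ T) : b ∈ connectedComponentIn (A ∩ B) a := by
  by_contra hab
  obtain ⟨u, hua, hub, hu⟩ := exists_continuous_zero_or_one_of_notMem_connectedComponentIn hK
    ⟨hSA ha.1, hTB ha.2⟩ ⟨hSA hb.1, hTB hb.2⟩ hab
  have cov := AddCircle.isCoveringMap_coe (1 : ℝ)
  have u_coe (x) (hx : x ∈ A ∩ B) : ((0 : ℝ) : AddCircle (1 : ℝ)) = u x := by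
    rcases hu x hx with h | h <;> simp [h, AddCircle.coe_period]
  obtain ⟨F, F_A, F_B⟩ := exists_continuousMap_comp_eqOn_of_isCoveringMap cov hA hB hAB
    (v := 0) (w := u) u_coe
  have F_coe (x) (hx : x ∈ S) : (F x : AddCircle (1 : ℝ)) = 0 := F_A (hSA hx)
  have F_sub_coe (x) (hx : x ∈ T) : ((F x - u x : ℝ) : AddCircle (1 : ℝ)) = 0 := by
    rw [AddCircle.coe_sub, sub_eq_zero]
    exact F_B (hTB hx)
  have F_eq : F a = F b := cov.constOn_of_comp hS F.continuous.continuousOn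
    (fun x hx y hy ↦ (F_coe x hx).trans (F_coe y hy).symm) ha.1 hb.1
  have F_sub_eq : F a - u a = F b - u b := cov.constOn_of_comp hT (F - u).continuous.continuousOn
    (fun x hx y hy ↦ (F_sub_coe x hx).trans (F_sub_coe y hy).symm) ha.2 hb.2
  linarith

theorem isPreconnected_singleton_prod_univ_union_univ_prod_singleton [PreconnectedSpace X]
    [PreconnectedSpace Y] (x : X) (y : Y) : IsPreconnected ({x} ×ˢ univ ∪ univ ×ˢ {y}) :=
  (isPreconnected_singleton.prod isPreconnected_univ).union (x, y) (by simp) (by simp)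
    (isPreconnected_univ.prod isPreconnected_singleton)

instance simplyConnectedSpace_prod [SimplyConnectedSpace X] [SimplyConnectedSpace Y] :
    SimplyConnectedSpace (X × Y) :=
  simply_connected_iff_paths_homotopic.mpr ⟨inferInstance, fun _ _ ↦ ⟨fun γ γ' ↦ by
    rw [← Path.Homotopic.prod_projLeft_projRight γ, ← Path.Homotopic.prod_projLeft_projRight γ',
      Subsingleton.elim (Path.Homotopic.projLeft γ) (Path.Homotopic.projLeft γ'),
      Subsingleton.elim (Path.Homotopic.projRight γ) (Path.Homotopic.projRight γ')]⟩⟩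

theorem double_point_component_lemma_general {α : Type*} [TopologicalSpace α] [LinearOrder α]
    [OrderClosedTopology α] [CompactSpace X] [T2Space X] [SimplyConnectedSpace X]
    [LocallyPathConnectedSpace X] [CompactSpace Y] [T2Space Y] [SimplyConnectedSpace Y]
    [LocallyPathConnectedSpace Y] {f : X → α} {g : Y → α} (hf : Continuous f) (hg : Continuous g)
    {x₀ x₁ : X} {y₀ y₁ : Y} (hx₀ : ∀ y, f x₀ ≤ g y) (hy₀ : ∀ x, g y₀ ≤ f x)
    (hx₁ : ∀ y, g y ≤ f x₁) (hy₁ : ∀ x, f x ≤ g y₁) :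
    (x₁, y₁) ∈ connectedComponentIn {z : X × Y | f z.1 = g z.2} (x₀, y₀) := by
  let A : Set (X × Y) := {z | f z.1 ≤ g z.2}
  let B : Set (X × Y) := {z | g z.2 ≤ f z.1}
  have hA : IsClosed A := isClosed_le (by fun_prop) (by fun_prop)
  have hB : IsClosed B := isClosed_le (by fun_prop) (by fun_prop)
  have hAB : A ∪ B = univ := eq_univ_of_forall fun z ↦ le_total (f z.1) (g z.2)
  have inter_eq : A ∩ B = {z | f z.1 = g z.2} := ext fun _ ↦ le_antisymm_iff.symm
  have hSA : {x₀} ×ˢ univ ∪ univ ×ˢ {y₁} ⊆ A := by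
    rintro ⟨x, y⟩ (⟨rfl, -⟩ | ⟨-, rfl⟩)
    exacts [hx₀ y, hy₁ x]
  have hTB : {x₁} ×ˢ univ ∪ univ ×ˢ {y₀} ⊆ B := by
    rintro ⟨x, y⟩ (⟨rfl, -⟩ | ⟨-, rfl⟩)
    exacts [hx₁ y, hy₀ x]
  rw [← inter_eq]
  exact mem_connectedComponentIn_inter_of_isPreconnected hA hB hAB (hA.inter hB).isCompact
    (isPreconnected_singleton_prod_univ_union_univ_prod_singleton x₀ y₁) hSA
    (isPreconnected_singleton_prod_univ_union_univ_prod_singleton x₁ y₀) hTB (by simp) (by simp)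

end General

instance contractibleSpace_unitInterval : ContractibleSpace I :=
  (convex_Icc (0 : ℝ) 1).contractibleSpace ⟨0, unitInterval.zero_mem⟩

instance locallyPathConnectedSpace_unitInterval : LocallyPathConnectedSpace I :=
  (convex_Icc (0 : ℝ) 1).locallyPathConnectedSpace

/-- Lemma 1: if f, g : [0,1] → [0,1] are continuous with f(0) = g(0) = 0 and
f(1) = g(1) = 1, then (0,0) and (1,1) lie in the same connected component of
{ (x,y) : f(x) = g(y) } ⊂ [0,1] × [0,1]. -/
theorem double_point_component_lemma (f g : unitInterval → unitInterval)
    (hf : Continuous f) (hg : Continuous g)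
    (hf0 : f 0 = 0) (hg0 : g 0 = 0) (hf1 : f 1 = 1) (hg1 : g 1 = 1) :
    ((1, 1) : unitInterval × unitInterval) ∈
      connectedComponentIn {z : unitInterval × unitInterval | f z.1 = g z.2}
        ((0, 0) : unitInterval × unitInterval) :=
  double_point_component_lemma_general hf hg (by simp [hf0]) (by simp [hg0])
    (by simp [hf1, le_one']) (by simp [hg1, le_one'])
end

section
/- Let n ≥ 1 and fix p ∈ Sⁿ. Let S̃ⁿ = { (x,y) ∈ Sⁿ × Sⁿ : x ≠ y } with the subspace topology (the deleted product of Sⁿ). Then there exists a continuous map φ : S̃ⁿ → Sⁿ which is a homotopy equivalence, is equivariant in the sense that φ(y,x) = −φ(x,y) for all (x,y) ∈ S̃ⁿ, and satisfies φ⁻¹({p, −p}) = ({p} × (Sⁿ \ {p})) ∪ ((Sⁿ \ {p}) × {p}). -/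
/-!
Let `φ (x, y)` be the normalization of `(1 - ⟪p, y⟫) • x - (1 - ⟪p, x⟫) • y`. Equivariance is
immediate. For `x, y ≠ p`, the component of this vector orthogonal to `p` is a positive multiple of
the difference of the stereographic projections of `x` and `y` from `p`, so `φ (x, y) = ±p` only if
`x = p` or `y = p`.

Moreover `⟪φ (x, y), x - y⟫ > 0`, and this alone makes the antidiagonal `x ↦ (x, -x)` a homotopy
inverse of `φ`: a straight line inside an open half-space bounded by a hyperplane through the origin
projects radially to the sphere, and two points strictly separated by such a hyperplane stay
distinct along the way.
-/

section

open Metric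
open scoped RealInnerProductSpace unitInterval

section Normalize

variable {E : Type*} [NormedAddCommGroup E] [NormedSpace ℝ E]

/-- The radial projection of a nonzero vector to the unit sphere: `NormedSpace.normalize` with its
codomain restricted to the sphere. -/
noncomputable def normalizeToSphere (v : E) (hv : v ≠ 0) : sphere (0 : E) 1 :=
  ⟨NormedSpace.normalize v, mem_sphere_zero_iff_norm.2 (NormedSpace.norm_normalize hv)⟩

theorem continuous_normalizeToSphere {X : Type*} [TopologicalSpace X] {f : X → E}
    (hf : Continuous f) (hf₀ : ∀ x, f x ≠ 0) :
    Continuous fun x => normalizeToSphere (f x) (hf₀ x) :=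
  ((hf.norm.inv₀ fun x => norm_ne_zero_iff.2 (hf₀ x)).smul hf).subtype_mk _

theorem normalizeToSphere_coe (x : sphere (0 : E) 1) (hx : (x : E) ≠ 0) :
    normalizeToSphere (x : E) hx = x :=
  Subtype.ext (NormedSpace.normalize_eq_self_of_norm_eq_one (norm_eq_of_mem_sphere x))

theorem normalizeToSphere_smul_coe {c : ℝ} (hc : 0 < c) (x : sphere (0 : E) 1)
    (hx : c • (x : E) ≠ 0) : normalizeToSphere (c • (x : E)) hx = x :=
  (Subtype.ext (NormedSpace.normalize_smul_of_pos hc _)).trans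
    (normalizeToSphere_coe x (ne_zero_of_mem_unit_sphere x))

theorem normalizeToSphere_neg (v : E) (hv : v ≠ 0) :
    normalizeToSphere (-v) (neg_ne_zero.2 hv) = -normalizeToSphere v hv :=
  Subtype.ext (NormedSpace.normalize_neg v)

theorem norm_smul_normalizeToSphere (v : E) (hv : v ≠ 0) :
    ‖v‖ • (normalizeToSphere v hv : E) = v :=
  NormedSpace.norm_smul_normalize v

end Normalize

variable {E : Type*} [NormedAddCommGroup E] [InnerProductSpace ℝ E]

theorem ne_zero_of_inner_pos {v u : E} (h : 0 < ⟪v, u⟫) : v ≠ 0 := by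
  rintro rfl
  simp at h

theorem inner_normalizeToSphere_pos {v u : E} (h : 0 < ⟪v, u⟫) :
    0 < ⟪(normalizeToSphere v (ne_zero_of_inner_pos h) : E), u⟫ := by
  change 0 < ⟪‖v‖⁻¹ • v, u⟫
  rw [real_inner_smul_left]
  exact mul_pos (inv_pos.2 (norm_pos_iff.2 (ne_zero_of_inner_pos h))) h

theorem inner_lineMap_pos {v w u : E} (hv : 0 < ⟪v, u⟫) (hw : 0 < ⟪w, u⟫) (t : I) :
    0 < ⟪AffineMap.lineMap v w (t : ℝ), u⟫ := by
  simp only [real_inner_comm u] at hv hw ⊢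
  exact (convex_halfSpace_gt (innerₛₗ ℝ u).isLinear 0).lineMap_mem hv hw t.2

section Homotopy

variable {X : Type*} [TopologicalSpace X]

/-- The radially projected straight-line homotopy between two maps to the unit sphere which at each
`x` have positive inner product with a common vector `u x`. The field `u` may be discontinuous. -/
noncomputable def sphereStraightLineHomotopy (f g : C(X, sphere (0 : E) 1)) (u : X → E)
    (hf : ∀ x, 0 < ⟪(f x : E), u x⟫) (hg : ∀ x, 0 < ⟪(g x : E), u x⟫) : f.Homotopy g where
  toFun tx := normalizeToSphere (AffineMap.lineMap (f tx.2 : E) (g tx.2 : E) (tx.1 : ℝ))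
    (ne_zero_of_inner_pos (inner_lineMap_pos (hf tx.2) (hg tx.2) tx.1))
  continuous_toFun := continuous_normalizeToSphere (by fun_prop) _
  map_zero_left x := by simp [normalizeToSphere_coe]
  map_one_left x := by simp [normalizeToSphere_coe]

theorem inner_sphereStraightLineHomotopy_pos {f g : C(X, sphere (0 : E) 1)} {u : X → E}
    (hf : ∀ x, 0 < ⟪(f x : E), u x⟫) (hg : ∀ x, 0 < ⟪(g x : E), u x⟫) (tx : I × X) :
    0 < ⟪(sphereStraightLineHomotopy f g u hf hg tx : E), u tx.2⟫ :=
  inner_normalizeToSphere_pos (inner_lineMap_pos (hf tx.2) (hg tx.2) tx.1)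

/-- The deleted product of the unit sphere: the ordered pairs of distinct points. -/
abbrev SphereDeletedProduct (E : Type*) [NormedAddCommGroup E] :=
  {z : sphere (0 : E) 1 × sphere (0 : E) 1 // z.1 ≠ z.2}

theorem SphereDeletedProduct.homotopic_of_separated (f g : C(X, SphereDeletedProduct E)) (u : X → E)
    (hf₁ : ∀ x, 0 < ⟪((f x).1.1 : E), u x⟫) (hf₂ : ∀ x, ⟪((f x).1.2 : E), u x⟫ < 0)
    (hg₁ : ∀ x, 0 < ⟪((g x).1.1 : E), u x⟫) (hg₂ : ∀ x, ⟪((g x).1.2 : E), u x⟫ < 0) :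
    f.Homotopic g := by
  simp only [← neg_pos (a := ⟪_, _⟫), ← inner_neg_right] at hf₂ hg₂
  let pr₁ : C(SphereDeletedProduct E, sphere (0 : E) 1) := ⟨fun z => z.1.1, by fun_prop⟩
  let pr₂ : C(SphereDeletedProduct E, sphere (0 : E) 1) := ⟨fun z => z.1.2, by fun_prop⟩
  let H₁ := sphereStraightLineHomotopy (pr₁.comp f) (pr₁.comp g) u hf₁ hg₁
  let H₂ := sphereStraightLineHomotopy (pr₂.comp f) (pr₂.comp g) (fun x => -u x) hf₂ hg₂
  have H_ne (tx : I × X) : H₁ tx ≠ H₂ tx := fun h => by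
    have h₁ : 0 < ⟪(H₁ tx : E), u tx.2⟫ := inner_sphereStraightLineHomotopy_pos hf₁ hg₁ tx
    have h₂ : 0 < ⟪(H₂ tx : E), -u tx.2⟫ := inner_sphereStraightLineHomotopy_pos hf₂ hg₂ tx
    rw [← h, inner_neg_right] at h₂
    linarith
  exact ⟨{
    toFun tx := ⟨(H₁ tx, H₂ tx), H_ne tx⟩
    continuous_toFun := by fun_prop
    map_zero_left x := Subtype.ext (Prod.ext (H₁.apply_zero x) (H₂.apply_zero x))
    map_one_left x := Subtype.ext (Prod.ext (H₁.apply_one x) (H₂.apply_one x)) }⟩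

end Homotopy

theorem inner_sphere_self (x : sphere (0 : E) 1) : ⟪(x : E), x⟫ = 1 :=
  inner_self_eq_one_of_norm_eq_one (norm_eq_of_mem_sphere x)

theorem inner_sphere_lt_one {x y : sphere (0 : E) 1} (h : x ≠ y) : ⟪(x : E), y⟫ < 1 :=
  (inner_lt_one_iff_real_of_norm_eq_one (norm_eq_of_mem_sphere x) (norm_eq_of_mem_sphere y)).2
    (Subtype.coe_ne_coe.2 h)

theorem inner_sphere_sub_pos {x y : sphere (0 : E) 1} (h : x ≠ y) : 0 < ⟪(x : E), (x : E) - y⟫ := by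
  rw [inner_sub_right, inner_sphere_self]
  exact sub_pos.2 (inner_sphere_lt_one h)

/-- The antidiagonal embedding `x ↦ (x, -x)` of the unit sphere into its deleted product. -/
def sphereAntidiagonal (E : Type*) [NormedAddCommGroup E] [NormedSpace ℝ E] :
    C(sphere (0 : E) 1, SphereDeletedProduct E) where
  toFun x := ⟨(x, -x), ne_neg_of_mem_unit_sphere ℝ x⟩
  continuous_toFun := by fun_prop

section InnerPos

variable {φ : C(SphereDeletedProduct E, sphere (0 : E) 1)}

theorem comp_sphereAntidiagonal_homotopic_id
    (hφ : ∀ z, 0 < ⟪(φ z : E), (z.1.1 : E) - z.1.2⟫) :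
    (φ.comp (sphereAntidiagonal E)).Homotopic (ContinuousMap.id _) :=
  ⟨sphereStraightLineHomotopy _ _ (fun x => (x : E) - (-x : sphere (0 : E) 1))
    (fun x => hφ (sphereAntidiagonal E x))
    (fun x => inner_sphere_sub_pos (ne_neg_of_mem_unit_sphere ℝ x))⟩

theorem sphereAntidiagonal_comp_homotopic_id
    (hφ : ∀ z, 0 < ⟪(φ z : E), (z.1.1 : E) - z.1.2⟫) :
    ((sphereAntidiagonal E).comp φ).Homotopic (ContinuousMap.id _) := by
  have antipode_neg (z : SphereDeletedProduct E) :
      ⟪((-φ z : sphere (0 : E) 1) : E), (z.1.1 : E) - z.1.2⟫ < 0 := by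
    rw [coe_neg_sphere, inner_neg_left]
    exact neg_lt_zero.2 (hφ z)
  have snd_neg (z : SphereDeletedProduct E) : ⟪(z.1.2 : E), (z.1.1 : E) - z.1.2⟫ < 0 := by
    rw [← neg_sub, inner_neg_right]
    exact neg_lt_zero.2 (inner_sphere_sub_pos z.2.symm)
  exact SphereDeletedProduct.homotopic_of_separated _ _ (fun z => (z.1.1 : E) - z.1.2)
    hφ antipode_neg (fun z => inner_sphere_sub_pos z.2) snd_neg

end InnerPos

/-- The antisymmetric combination of `x` and `y` whose normalization is the equivariant map. On the
unit sphere its component orthogonal to `p` is, up to the factor `1 / 2`, the difference of the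
stereographic projections of `x` and `y` from `p` with the denominators cleared. -/
noncomputable def weightedDiff (p x y : E) : E :=
  (1 - ⟪p, y⟫) • x - (1 - ⟪p, x⟫) • y

theorem weightedDiff_swap (p x y : E) : weightedDiff p y x = -weightedDiff p x y :=
  (neg_sub _ _).symm

theorem weightedDiff_self_left (p y : E) (hp : ‖p‖ = 1) :
    weightedDiff p p y = (1 - ⟪p, y⟫) • p := by
  simp [weightedDiff, hp]

theorem inner_weightedDiff_sub (p : E) (x y : sphere (0 : E) 1) :
    ⟪weightedDiff p x y, (x : E) - y⟫ = (1 - ⟪p, x⟫ + (1 - ⟪p, y⟫)) * (1 - ⟪(x : E), y⟫) := by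
  simp only [weightedDiff, inner_sub_left, inner_sub_right, real_inner_smul_left,
    inner_sphere_self, real_inner_comm (x : E) (y : E)]
  ring

theorem inner_weightedDiff_sub_pos (p : sphere (0 : E) 1) {x y : sphere (0 : E) 1} (h : x ≠ y) :
    0 < ⟪weightedDiff (p : E) x y, (x : E) - y⟫ := by
  have inner_le_one (z : sphere (0 : E) 1) : ⟪(p : E), z⟫ ≤ 1 := by
    simpa using real_inner_le_norm (p : E) (z : E)
  rw [inner_weightedDiff_sub]
  refine mul_pos ?_ (sub_pos.2 (inner_sphere_lt_one h))
  rcases eq_or_ne p x with rfl | hx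
  · linarith [inner_le_one p, inner_sphere_lt_one h]
  · linarith [inner_le_one y, inner_sphere_lt_one hx]

theorem weightedDiff_ne_zero (p : sphere (0 : E) 1) {x y : sphere (0 : E) 1} (h : x ≠ y) :
    weightedDiff (p : E) x y ≠ 0 :=
  ne_zero_of_inner_pos (inner_weightedDiff_sub_pos p h)

theorem orthogonalProjectionOnto_weightedDiff {p x y : sphere (0 : E) 1} (hx : x ≠ p)
    (hy : y ≠ p) :
    (ℝ ∙ (p : E))ᗮ.orthogonalProjectionOnto (weightedDiff (p : E) x y) =
      ((1 - ⟪(p : E), x⟫) * (1 - ⟪(p : E), y⟫) / 2) •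
        (stereographic (norm_eq_of_mem_sphere p) x -
          stereographic (norm_eq_of_mem_sphere p) y) := by
  have hx' : 1 - ⟪(p : E), x⟫ ≠ 0 := (sub_pos.2 (inner_sphere_lt_one hx.symm)).ne'
  have hy' : 1 - ⟪(p : E), y⟫ ≠ 0 := (sub_pos.2 (inner_sphere_lt_one hy.symm)).ne'
  rw [weightedDiff, map_sub, map_smul, map_smul, smul_sub, stereographic_apply,
    stereographic_apply, smul_smul, smul_smul]
  congr 2 <;> field_simp

theorem eq_or_eq_of_weightedDiff_mem_span {p x y : sphere (0 : E) 1} (h : x ≠ y)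
    (hspan : weightedDiff (p : E) x y ∈ ℝ ∙ (p : E)) : x = p ∨ y = p := by
  by_contra! hne
  obtain ⟨hx, hy⟩ := hne
  have hproj := orthogonalProjectionOnto_weightedDiff hx hy
  rw [Submodule.orthogonalProjectionOnto_orthogonal_apply_eq_zero hspan, eq_comm, smul_eq_zero]
    at hproj
  have hcoef : (1 - ⟪(p : E), x⟫) * (1 - ⟪(p : E), y⟫) / 2 ≠ 0 :=
    (half_pos (mul_pos (sub_pos.2 (inner_sphere_lt_one hx.symm))
      (sub_pos.2 (inner_sphere_lt_one hy.symm)))).ne'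
  exact h ((stereographic (norm_eq_of_mem_sphere p)).injOn hx hy
    (sub_eq_zero.1 (hproj.resolve_left hcoef)))

/-- The normalization of `weightedDiff p`, as a map from the deleted product to the sphere. -/
noncomputable def deletedProductToSphere (p : sphere (0 : E) 1) :
    C(SphereDeletedProduct E, sphere (0 : E) 1) where
  toFun z := normalizeToSphere (weightedDiff (p : E) z.1.1 z.1.2) (weightedDiff_ne_zero p z.2)
  continuous_toFun := continuous_normalizeToSphere (by unfold weightedDiff; fun_prop) _

theorem inner_deletedProductToSphere_pos (p : sphere (0 : E) 1) (z : SphereDeletedProduct E) :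
    0 < ⟪(deletedProductToSphere p z : E), (z.1.1 : E) - z.1.2⟫ :=
  inner_normalizeToSphere_pos (inner_weightedDiff_sub_pos p z.2)

theorem deletedProductToSphere_swap (p : sphere (0 : E) 1) {x y : sphere (0 : E) 1} (h : x ≠ y) :
    deletedProductToSphere p ⟨(y, x), h.symm⟩ = -deletedProductToSphere p ⟨(x, y), h⟩ := by
  simp only [deletedProductToSphere, ContinuousMap.coe_mk, weightedDiff_swap (p : E) x y,
    normalizeToSphere_neg _ (weightedDiff_ne_zero p h)]

theorem deletedProductToSphere_left (p : sphere (0 : E) 1) {y : sphere (0 : E) 1} (h : p ≠ y) :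
    deletedProductToSphere p ⟨(p, y), h⟩ = p := by
  simp only [deletedProductToSphere, ContinuousMap.coe_mk,
    weightedDiff_self_left _ _ (norm_eq_of_mem_sphere p),
    normalizeToSphere_smul_coe (sub_pos.2 (inner_sphere_lt_one h))]

theorem deletedProductToSphere_mem_pair_iff (p : sphere (0 : E) 1) {x y : sphere (0 : E) 1}
    (h : x ≠ y) :
    deletedProductToSphere p ⟨(x, y), h⟩ ∈ ({p, -p} : Set (sphere (0 : E) 1)) ↔
      x = p ∨ y = p := by
  constructor
  · intro hmem
    have hspan : (deletedProductToSphere p ⟨(x, y), h⟩ : E) ∈ ℝ ∙ (p : E) := by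
      rcases hmem with hp | hp <;> rw [hp]
      · exact Submodule.mem_span_singleton_self _
      · exact neg_mem (Submodule.mem_span_singleton_self _)
    refine eq_or_eq_of_weightedDiff_mem_span h ?_
    rw [← norm_smul_normalizeToSphere _ (weightedDiff_ne_zero p h)]
    exact Submodule.smul_mem _ _ hspan
  · rintro (rfl | rfl)
    · exact Or.inl (deletedProductToSphere_left x h)
    · refine Or.inr ?_
      rw [deletedProductToSphere_swap y h.symm, deletedProductToSphere_left y h.symm]
      rfl

theorem deletedProductToSphere_preimage_pair (p : sphere (0 : E) 1) :
    deletedProductToSphere p ⁻¹' {p, -p} =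
      Subtype.val ⁻¹' (({p} : Set (sphere (0 : E) 1)) ×ˢ {p}ᶜ ∪ {p}ᶜ ×ˢ {p}) := by
  ext ⟨⟨x, y⟩, h⟩
  rw [Set.mem_preimage, deletedProductToSphere_mem_pair_iff p h]
  simp only [Set.mem_preimage, Set.mem_union, Set.mem_prod, Set.mem_singleton_iff,
    Set.mem_compl_iff]
  grind

theorem deleted_product_equivariant_homotopy_equivalence_general (p : sphere (0 : E) 1) :
    ∃ φ : C(SphereDeletedProduct E, sphere (0 : E) 1),
      (∃ ψ : C(sphere (0 : E) 1, SphereDeletedProduct E),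
        (φ.comp ψ).Homotopic (ContinuousMap.id _) ∧
        (ψ.comp φ).Homotopic (ContinuousMap.id _)) ∧
      (∀ (x y : sphere (0 : E) 1) (hxy : x ≠ y),
        φ ⟨(y, x), hxy.symm⟩ = -(φ ⟨(x, y), hxy⟩)) ∧
      ⇑φ ⁻¹' {p, -p} =
        Subtype.val ⁻¹' (({p} : Set (sphere (0 : E) 1)) ×ˢ {p}ᶜ ∪ {p}ᶜ ×ˢ {p}) :=
  have hφ := inner_deletedProductToSphere_pos p
  ⟨deletedProductToSphere p,
    ⟨sphereAntidiagonal E, comp_sphereAntidiagonal_homotopic_id hφ,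
      sphereAntidiagonal_comp_homotopic_id hφ⟩,
    fun _ _ hxy => deletedProductToSphere_swap p hxy,
    deletedProductToSphere_preimage_pair p⟩

end

/-- Lemma 8: for n ≥ 1 and p ∈ Sⁿ there is an equivariant homotopy
equivalence φ from the deleted product S̃ⁿ = Sⁿ × Sⁿ \ Δ to Sⁿ (φ(y,x) = -φ(x,y)) with
φ⁻¹({p, -p}) = ({p} × (Sⁿ \ {p})) ∪ ((Sⁿ \ {p}) × {p}). -/
theorem deleted_product_equivariant_homotopy_equivalence (n : ℕ) (hn : 1 ≤ n)
    (p : Metric.sphere (0 : EuclideanSpace ℝ (Fin (n + 1))) 1) :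
    ∃ φ : C({z : Metric.sphere (0 : EuclideanSpace ℝ (Fin (n + 1))) 1 ×
              Metric.sphere (0 : EuclideanSpace ℝ (Fin (n + 1))) 1 // z.1 ≠ z.2},
           Metric.sphere (0 : EuclideanSpace ℝ (Fin (n + 1))) 1),
      (∃ ψ : C(Metric.sphere (0 : EuclideanSpace ℝ (Fin (n + 1))) 1,
              {z : Metric.sphere (0 : EuclideanSpace ℝ (Fin (n + 1))) 1 ×
                Metric.sphere (0 : EuclideanSpace ℝ (Fin (n + 1))) 1 // z.1 ≠ z.2}),
        (φ.comp ψ).Homotopic (ContinuousMap.id _) ∧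
        (ψ.comp φ).Homotopic (ContinuousMap.id _)) ∧
      (∀ (x y : Metric.sphere (0 : EuclideanSpace ℝ (Fin (n + 1))) 1) (hxy : x ≠ y),
        φ ⟨(y, x), Ne.symm hxy⟩ = -(φ ⟨(x, y), hxy⟩)) ∧
      ⇑φ ⁻¹' {p, -p} =
        Subtype.val ⁻¹'
          (({p} : Set (Metric.sphere (0 : EuclideanSpace ℝ (Fin (n + 1))) 1)) ×ˢ {p}ᶜ ∪
            ({p}ᶜ : Set (Metric.sphere (0 : EuclideanSpace ℝ (Fin (n + 1))) 1)) ×ˢ {p}) :=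
  deleted_product_equivariant_homotopy_equivalence_general p
end

section
/- Let n ≥ 1 and let S̃ⁿ = { (x,y) ∈ Sⁿ × Sⁿ : x ≠ y } with the subspace topology, and let ∇ = { (x, −x) : x ∈ Sⁿ } ⊂ S̃ⁿ be the antidiagonal. Then ∇ is an equivariant strong deformation retract of S̃ⁿ: there exists a continuous map H : S̃ⁿ × [0,1] → S̃ⁿ such that H(z, 0) = z for all z, H(z, 1) ∈ ∇ for all z, H((x,−x), t) = (x,−x) for all x ∈ Sⁿ and t ∈ [0,1], and H(τ(z), t) = τ(H(z, t)) for all z and t, where τ(x,y) = (y,x). -/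
open unitInterval

/-!
Push each of the two points directly away from the other: at time `t`, the pair `(x, y)` is moved
to the normalizations of `x - t • y` and `y - t • x`. At time `1` these are opposite unit vectors.
If at some time `t ≥ 0` one of the two vectors vanished, or both pointed in the same direction, a
positive combination would show that `x` and `y` themselves lie on the same ray, hence are equal,
being unit vectors.
-/

section DeletedProduct

variable {X : Type*}

/-- The deleted product of `X`: the ordered pairs of distinct points of `X`, topologized as a
subspace of `X × X`. -/
abbrev DeletedProduct (X : Type*) := {z : X × X // z.1 ≠ z.2}

/-- The factor-exchanging involution of the deleted product. -/
def DeletedProduct.swap (z : DeletedProduct X) : DeletedProduct X :=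
  ⟨z.val.swap, z.prop.symm⟩

lemma DeletedProduct.continuous_swap [TopologicalSpace X] :
    Continuous (swap : DeletedProduct X → DeletedProduct X) :=
  (_root_.continuous_swap.comp continuous_subtype_val).subtype_mk _

end DeletedProduct

lemma sameRay_of_sameRay_sub_smul {R M : Type*} [CommRing R] [PartialOrder R]
    [IsStrictOrderedRing R] [AddCommGroup M] [Module R M] {x y : M} {t : R} (ht : 0 ≤ t)
    (h : SameRay R (x - t • y) (y - t • x)) : SameRay R x y := by
  obtain hx | hy | ⟨a, b, ha, hb, hab⟩ := h
  · rw [sub_eq_zero.mp hx]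
    exact SameRay.sameRay_nonneg_smul_left y ht
  · rw [sub_eq_zero.mp hy]
    exact SameRay.sameRay_nonneg_smul_right x ht
  · refine .inr (.inr ⟨a + b * t, b + a * t, by positivity, by positivity, ?_⟩)
    linear_combination (norm := module) hab

section Sphere

open Metric NormedSpace

variable {E : Type*} [NormedAddCommGroup E] [NormedSpace ℝ E]

lemma sameRay_coe_sphere_iff {r : ℝ} {x y : sphere (0 : E) r} :
    SameRay ℝ (x : E) (y : E) ↔ x = y := by
  rw [sameRay_iff_of_norm_eq ((norm_eq_of_mem_sphere x).trans (norm_eq_of_mem_sphere y).symm),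
    Subtype.coe_inj]

lemma sub_smul_ne_zero_of_ne_of_mem_sphere {r : ℝ} {x y : sphere (0 : E) r} (hxy : x ≠ y) {t : ℝ}
    (ht : 0 ≤ t) : (x : E) - t • (y : E) ≠ 0 := fun h =>
  hxy <| sameRay_coe_sphere_iff.mp <| sameRay_of_sameRay_sub_smul ht <| .inl h

/-- The first point of a pair `z = (x, y)` of distinct unit vectors, pushed directly away from the
second one for time `t`: the unit vector in the direction of `x - t • y`. -/
noncomputable def pushAway (z : DeletedProduct (sphere (0 : E) 1)) (t : I) : sphere (0 : E) 1 :=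
  ⟨normalize ((z.val.1 : E) - (t : ℝ) • (z.val.2 : E)), mem_sphere_zero_iff_norm.mpr <|
    norm_normalize <| sub_smul_ne_zero_of_ne_of_mem_sphere z.prop t.2.1⟩

lemma coe_pushAway (z : DeletedProduct (sphere (0 : E) 1)) (t : I) :
    (pushAway z t : E) = normalize ((z.val.1 : E) - (t : ℝ) • (z.val.2 : E)) :=
  rfl

lemma pushAway_ne_pushAway_swap (z : DeletedProduct (sphere (0 : E) 1)) (t : I) :
    pushAway z t ≠ pushAway z.swap t := by
  intro h
  have hray : SameRay ℝ ((z.val.1 : E) - (t : ℝ) • (z.val.2 : E))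
      ((z.val.2 : E) - (t : ℝ) • (z.val.1 : E)) :=
    sameRay_iff_inv_norm_smul_eq.mpr <| .inr <| .inr <| congrArg Subtype.val h
  exact z.prop <| sameRay_coe_sphere_iff.mp <| sameRay_of_sameRay_sub_smul t.2.1 hray

lemma pushAway_zero (z : DeletedProduct (sphere (0 : E) 1)) : pushAway z 0 = z.val.1 := by
  ext1
  rw [coe_pushAway, Set.Icc.coe_zero, zero_smul, sub_zero,
    normalize_eq_self_of_norm_eq_one (norm_eq_of_mem_sphere z.val.1)]

lemma pushAway_swap_one (z : DeletedProduct (sphere (0 : E) 1)) :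
    pushAway z.swap 1 = -pushAway z 1 := by
  ext1
  rw [coe_neg_sphere, coe_pushAway, coe_pushAway, ← normalize_neg]
  simp [DeletedProduct.swap]

lemma pushAway_of_snd_eq_neg_fst {z : DeletedProduct (sphere (0 : E) 1)} (hz : z.val.2 = -z.val.1)
    (t : I) : pushAway z t = z.val.1 := by
  have ht : 0 < 1 + (t : ℝ) := add_pos_of_pos_of_nonneg one_pos t.2.1
  have hray : (z.val.1 : E) - (t : ℝ) • (z.val.2 : E) = (1 + (t : ℝ)) • (z.val.1 : E) := by
    rw [hz, coe_neg_sphere]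
    module
  ext1
  rw [coe_pushAway, hray, normalize_smul_of_pos ht,
    normalize_eq_self_of_norm_eq_one (norm_eq_of_mem_sphere z.val.1)]

lemma continuous_pushAway :
    Continuous fun p : DeletedProduct (sphere (0 : E) 1) × I => pushAway p.1 p.2 := by
  have hsub : Continuous fun p : DeletedProduct (sphere (0 : E) 1) × I =>
      (p.1.val.1 : E) - (p.2 : ℝ) • (p.1.val.2 : E) := by
    fun_prop
  exact ((hsub.norm.inv₀ fun p => norm_ne_zero_iff.mpr <|
    sub_smul_ne_zero_of_ne_of_mem_sphere p.1.prop p.2.2.1).smul hsub).subtype_mk _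

/-- The homotopy deforming the deleted product of the unit sphere onto the antidiagonal, which
pushes both points of a pair away from each other. -/
noncomputable def antidiagonalDeformation (p : DeletedProduct (sphere (0 : E) 1) × I) :
    DeletedProduct (sphere (0 : E) 1) :=
  ⟨(pushAway p.1 p.2, pushAway p.1.swap p.2), pushAway_ne_pushAway_swap p.1 p.2⟩

lemma continuous_antidiagonalDeformation : Continuous (antidiagonalDeformation (E := E)) := by
  have hswap : Continuous fun p : DeletedProduct (sphere (0 : E) 1) × I => (p.1.swap, p.2) :=
    DeletedProduct.continuous_swap.prodMap continuous_id
  exact (continuous_pushAway.prodMk (continuous_pushAway.comp hswap)).subtype_mk _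

lemma antidiagonalDeformation_zero (z : DeletedProduct (sphere (0 : E) 1)) :
    antidiagonalDeformation (z, 0) = z :=
  Subtype.ext <| Prod.ext (pushAway_zero z) (pushAway_zero z.swap)

lemma antidiagonalDeformation_of_snd_eq_neg_fst {z : DeletedProduct (sphere (0 : E) 1)}
    (hz : z.val.2 = -z.val.1) (t : I) : antidiagonalDeformation (z, t) = z :=
  Subtype.ext <| Prod.ext (pushAway_of_snd_eq_neg_fst hz t)
    (pushAway_of_snd_eq_neg_fst (z := z.swap) (neg_eq_iff_eq_neg.mp hz.symm) t)

theorem antidiagonal_equivariant_deformation_retract_general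
    (E : Type*) [NormedAddCommGroup E] [NormedSpace ℝ E] :
    ∃ H : DeletedProduct (sphere (0 : E) 1) × I → DeletedProduct (sphere (0 : E) 1),
      Continuous H ∧
      (∀ z, H (z, 0) = z) ∧
      (∀ z, (H (z, 1)).val.2 = -(H (z, 1)).val.1) ∧
      (∀ z, z.val.2 = -z.val.1 → ∀ t, H (z, t) = z) ∧
      (∀ z t, H (z.swap, t) = (H (z, t)).swap) :=
  ⟨antidiagonalDeformation, continuous_antidiagonalDeformation, antidiagonalDeformation_zero,
    pushAway_swap_one, fun _ => antidiagonalDeformation_of_snd_eq_neg_fst, fun _ _ => rfl⟩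

end Sphere

/-- proof of Lemma 8: the antidiagonal ∇ = {(x, -x)} is an equivariant
strong deformation retract of the deleted product S̃ⁿ = Sⁿ × Sⁿ \ Δ. -/
theorem antidiagonal_equivariant_deformation_retract (n : ℕ) (hn : 1 ≤ n) :
    ∃ H : {z : Metric.sphere (0 : EuclideanSpace ℝ (Fin (n + 1))) 1 ×
            Metric.sphere (0 : EuclideanSpace ℝ (Fin (n + 1))) 1 // z.1 ≠ z.2} × unitInterval →
          {z : Metric.sphere (0 : EuclideanSpace ℝ (Fin (n + 1))) 1 ×
            Metric.sphere (0 : EuclideanSpace ℝ (Fin (n + 1))) 1 // z.1 ≠ z.2},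
      Continuous H ∧
      (∀ z, H (z, 0) = z) ∧
      (∀ z, ((H (z, 1)).val.2 : Metric.sphere (0 : EuclideanSpace ℝ (Fin (n + 1))) 1)
              = -((H (z, 1)).val.1)) ∧
      (∀ (x : Metric.sphere (0 : EuclideanSpace ℝ (Fin (n + 1))) 1)
          (hx : ((x, -x) : Metric.sphere (0 : EuclideanSpace ℝ (Fin (n + 1))) 1 ×
                  Metric.sphere (0 : EuclideanSpace ℝ (Fin (n + 1))) 1).1 ≠ (x, -x).2)
          (t : unitInterval), H (⟨(x, -x), hx⟩, t) = ⟨(x, -x), hx⟩) ∧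
      (∀ (z : {z : Metric.sphere (0 : EuclideanSpace ℝ (Fin (n + 1))) 1 ×
                Metric.sphere (0 : EuclideanSpace ℝ (Fin (n + 1))) 1 // z.1 ≠ z.2})
          (t : unitInterval),
        ((H (⟨Prod.swap z.val, Ne.symm z.prop⟩, t)).val : _) = Prod.swap ((H (z, t)).val)) := by
  obtain ⟨H, hcont, hzero, hone, hfix, hswap⟩ :=
    antidiagonal_equivariant_deformation_retract_general (EuclideanSpace ℝ (Fin (n + 1)))
  exact ⟨H, hcont, hzero, hone, fun _ _ => hfix _ rfl, fun z t => congrArg Subtype.val (hswap z t)⟩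
end

section
/- Let G be a finite group acting freely by homeomorphisms on a nonempty connected Hausdorff topological space X (freely: g • x = x implies g = 1). Let Σ = { (x,y) ∈ X × X : x ≠ y and ∃ g ∈ G, y = g • x } with the subspace topology; this is the double point set Σ_q of the quotient map q : X → X/G, i.e. Σ = { (x,y) : x ≠ y and q(x) = q(y) }. Then: (1) the connected components of Σ are exactly the sets Γ_g = { (x, g • x) : x ∈ X } for g ∈ G with g ≠ 1, and these sets are pairwise distinct; (2) the swap involution τ(x,y) = (y,x) maps Γ_g onto Γ_{g⁻¹}; consequently a component Γ_g is τ-invariant if and only if g² = 1. -/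
/-- The double point set of the quotient map X → X/G of a group action: pairs of distinct
points lying in the same orbit. -/
def doublePointSet (G : Type*) {X : Type*} [Group G] [MulAction G X] : Set (X × X) :=
  {z | z.1 ≠ z.2 ∧ ∃ g : G, z.2 = g • z.1}

/-- The subset Γ_g = {(x, g • x)} of the double point set. -/
def gammaComponent {G X : Type*} [Group G] [MulAction G X] (g : G) :
    Set (doublePointSet G (X := X)) :=
  {z | z.val.2 = g • z.val.1}

/-- The factor-exchanging involution τ(x,y) = (y,x) on the double point set. -/
def tauSwap {G X : Type*} [Group G] [MulAction G X] :
    doublePointSet G (X := X) → doublePointSet G (X := X) := fun z =>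
  ⟨Prod.swap z.val, by
    obtain ⟨hne, g, hg⟩ := z.prop
    exact ⟨Ne.symm hne, g⁻¹, by simp [Prod.swap, hg]⟩⟩

/-! On the double point set, `(x, y) ↦ y` and `(x, y) ↦ g • x` lift the same map along the covering
`q : X → X/G`. The set `Γ_g` is the locus where these two lifts agree, so it is clopen; for `g ≠ 1`
it is also the image of the connected space `X` under `x ↦ (x, g • x)`, hence a component. For a
finite group acting freely on a Hausdorff space, `q` is a covering because finitely many
neighborhoods separating `x` from its translates can be intersected. -/

open Topology

section GroupAction

variable {G X : Type*} [Group G] [MulAction G X]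

theorem exists_mem_gammaComponent (z : doublePointSet G (X := X)) :
    ∃ g : G, z ∈ gammaComponent g :=
  z.prop.2

theorem ne_one_of_mem_gammaComponent {g : G} {z : doublePointSet G (X := X)}
    (hz : z ∈ gammaComponent g) : g ≠ 1 := by
  rintro rfl
  exact z.prop.1 (hz.trans (one_smul G z.val.1)).symm

theorem tauSwap_involutive : Function.Involutive (tauSwap (G := G) (X := X)) :=
  fun _ => rfl

theorem tauSwap_mem_gammaComponent_iff {g : G} {z : doublePointSet G (X := X)} :
    tauSwap z ∈ gammaComponent g ↔ z ∈ gammaComponent g⁻¹ :=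
  eq_comm.trans eq_inv_smul_iff.symm

theorem tauSwap_image_gammaComponent (g : G) :
    tauSwap '' gammaComponent (X := X) g = gammaComponent g⁻¹ := by
  rw [tauSwap_involutive.image_eq_preimage_symm]
  exact Set.ext fun _ => tauSwap_mem_gammaComponent_iff

end GroupAction

section FreeAction

variable {G X : Type*} [Group G] [MulAction G X] [IsCancelSMul G X]

theorem eq_of_mem_gammaComponent {g h : G} {z : doublePointSet G (X := X)}
    (hg : z ∈ gammaComponent g) (hh : z ∈ gammaComponent h) : g = h :=
  IsCancelSMul.right_cancel g h z.val.1 (hg.symm.trans hh)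

/-- The section `x ↦ (x, g • x)` of the first projection of the double point set, for `g ≠ 1`
in a group acting freely (`IsCancelSMul`). It parametrizes `Γ_g` by `X`. -/
def graphSection {g : G} (hg : g ≠ 1) (x : X) : doublePointSet G (X := X) :=
  ⟨(x, g • x), fun hx => hg (IsCancelSMul.eq_one_of_smul hx.symm), g, rfl⟩

theorem range_graphSection {g : G} (hg : g ≠ 1) :
    Set.range (graphSection (X := X) hg) = gammaComponent g := by
  refine Set.Subset.antisymm (Set.range_subset_iff.mpr fun _ => rfl) fun z hz => ?_
  exact ⟨z.val.1, Subtype.ext (Prod.ext rfl hz.symm)⟩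

theorem gammaComponent_nonempty_iff [Nonempty X] {g : G} :
    (gammaComponent (X := X) g).Nonempty ↔ g ≠ 1 :=
  ⟨fun ⟨_, hz⟩ => ne_one_of_mem_gammaComponent hz,
    fun hg => range_graphSection (X := X) hg ▸ Set.range_nonempty _⟩

theorem gammaComponent_injective [Nonempty X] :
    Function.Injective (gammaComponent (G := G) (X := X)) := by
  intro g h hgh
  have one_iff : g = 1 ↔ h = 1 := not_iff_not.mp <|
    (gammaComponent_nonempty_iff (X := X)).symm.trans (hgh ▸ gammaComponent_nonempty_iff)
  by_cases hg : g = 1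
  · exact hg.trans (one_iff.mp hg).symm
  · obtain ⟨z, hz⟩ := gammaComponent_nonempty_iff (X := X).mpr hg
    exact eq_of_mem_gammaComponent hz (hgh ▸ hz)

theorem tauSwap_image_gammaComponent_eq_self_iff [Nonempty X] {g : G} :
    tauSwap '' gammaComponent (X := X) g = gammaComponent g ↔ g ^ 2 = 1 := by
  rw [tauSwap_image_gammaComponent, gammaComponent_injective.eq_iff, inv_eq_iff_mul_eq_one, sq]

theorem isPreconnected_gammaComponent [TopologicalSpace X] [PreconnectedSpace X]
    [ContinuousConstSMul G X] {g : G} (hg : g ≠ 1) :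
    IsPreconnected (gammaComponent (X := X) g) := by
  rw [← range_graphSection hg]
  exact isPreconnected_range ((continuous_id.prodMk (continuous_const_smul g)).subtype_mk _)

end FreeAction

section QuotientCovering

variable {G X Y : Type*} [Group G] [MulAction G X] [TopologicalSpace X] [TopologicalSpace Y]
  {q : X → Y}

theorem isClopen_gammaComponent (hq : IsQuotientCoveringMap q G) (g : G) :
    IsClopen (gammaComponent (X := X) g) := by
  have := hq.toContinuousConstSMul
  let snd (z : doublePointSet G (X := X)) : X := z.val.2
  let smulFst (z : doublePointSet G (X := X)) : X := g • z.val.1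
  have continuous_snd : Continuous snd := by fun_prop
  have continuous_smulFst : Continuous smulFst := by fun_prop
  have lifts_same_map : q ∘ snd = q ∘ smulFst := by
    funext z
    obtain ⟨h, hz⟩ := z.prop.2
    calc q z.val.2 = q (h • z.val.1) := congrArg q hz
      _ = q z.val.1 := hq.map_smul h
      _ = q (g • z.val.1) := (hq.map_smul g).symm
  exact ⟨hq.isCoveringMap.isSeparatedMap.isClosed_eqLocus
      continuous_snd continuous_smulFst lifts_same_map,
    hq.isCoveringMap.isLocalHomeomorph.isLocallyInjective.isOpen_eqLocus
      continuous_snd continuous_smulFst lifts_same_map⟩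

theorem connectedComponent_eq_gammaComponent [PreconnectedSpace X]
    (hq : IsQuotientCoveringMap q G) {g : G} {z : doublePointSet G (X := X)}
    (hz : z ∈ gammaComponent g) : connectedComponent z = gammaComponent g := by
  have := hq.toContinuousConstSMul
  have := hq.isCancelSMul
  exact ((isClopen_gammaComponent hq g).connectedComponent_subset hz).antisymm
    ((isPreconnected_gammaComponent
      (ne_one_of_mem_gammaComponent hz)).subset_connectedComponent hz)

theorem setOf_connectedComponent_eq_setOf_gammaComponent [ConnectedSpace X]
    (hq : IsQuotientCoveringMap q G) :
    {C : Set (doublePointSet G (X := X)) | ∃ z, C = connectedComponent z}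
      = {C | ∃ g : G, g ≠ 1 ∧ C = gammaComponent g} := by
  have := hq.isCancelSMul
  ext C
  constructor
  · rintro ⟨z, rfl⟩
    obtain ⟨g, hz⟩ := exists_mem_gammaComponent z
    exact ⟨g, ne_one_of_mem_gammaComponent hz, connectedComponent_eq_gammaComponent hq hz⟩
  · rintro ⟨g, hg, rfl⟩
    obtain ⟨z, hz⟩ := gammaComponent_nonempty_iff (X := X).mpr hg
    exact ⟨z, (connectedComponent_eq_gammaComponent hq hz).symm⟩

theorem components_of_double_point_set_of_free_action_general [ConnectedSpace X]
    (hq : IsQuotientCoveringMap q G) :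
    ({C : Set (doublePointSet G (X := X)) | ∃ z, C = connectedComponent z}
        = {C | ∃ g : G, g ≠ 1 ∧ C = gammaComponent g}) ∧
    Function.Injective (gammaComponent (G := G) (X := X)) ∧
    (∀ g : G, tauSwap '' gammaComponent (X := X) g = gammaComponent g⁻¹) ∧
    (∀ g : G, tauSwap '' gammaComponent (X := X) g = gammaComponent g ↔ g ^ 2 = 1) :=
  have := hq.isCancelSMul
  ⟨setOf_connectedComponent_eq_setOf_gammaComponent hq, gammaComponent_injective,
    tauSwap_image_gammaComponent, fun _ => tauSwap_image_gammaComponent_eq_self_iff⟩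

end QuotientCovering

section FiniteGroup

variable {G X : Type*} [Group G] [Finite G] [TopologicalSpace X] [T2Space X] [MulAction G X]
  [ContinuousConstSMul G X] [IsCancelSMul G X]

theorem exists_nhds_image_smul_eq_one (x : X) :
    ∃ U ∈ 𝓝 x, ∀ g : G, ((g • ·) '' U ∩ U).Nonempty → g = 1 := by
  have separated (g : G) : ∃ U ∈ 𝓝 x, ((g • ·) '' U ∩ U).Nonempty → g = 1 := by
    by_cases hg : g = 1
    · exact ⟨Set.univ, Filter.univ_mem, fun _ => hg⟩
    obtain ⟨V, W, hV, hW, hVW⟩ :=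
      t2_separation_nhds fun hx : g • x = x => hg (IsCancelSMul.eq_one_of_smul hx)
    refine ⟨(g • ·) ⁻¹' V ∩ W,
      Filter.inter_mem ((continuous_const_smul g).continuousAt hV) hW, ?_⟩
    rintro ⟨_, ⟨y, hy, rfl⟩, hgy⟩
    exact (Set.disjoint_left.mp hVW hy.1 hgy.2).elim
  choose U hU hU_one using separated
  refine ⟨⋂ g, U g, Filter.iInter_mem.mpr hU, fun g hg => hU_one g (hg.mono ?_)⟩
  gcongr <;> exact Set.iInter_subset U g

theorem isQuotientCoveringMap_of_finite {Y : Type*} [TopologicalSpace Y] {q : X → Y}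
    (hq : IsQuotientMap q) (hqG : ∀ {x y}, q x = q y ↔ x ∈ MulAction.orbit G y) :
    IsQuotientCoveringMap q G where
  __ := hq
  continuous_const_smul := continuous_const_smul
  apply_eq_iff_mem_orbit := hqG
  disjoint := exists_nhds_image_smul_eq_one

end FiniteGroup

/-- Example 3: for a free action of a finite group G on a nonempty connected
Hausdorff space X by homeomorphisms, the connected components of the double point set of
the quotient map X → X/G are exactly the graphs Γ_g = {(x, g • x)}, g ≠ 1, which are
pairwise distinct; the swap involution τ maps Γ_g onto Γ_{g⁻¹}, so Γ_g is τ-invariant iff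
g² = 1. -/
theorem components_of_double_point_set_of_free_action
    {G X : Type*} [Group G] [Finite G] [TopologicalSpace X] [T2Space X] [ConnectedSpace X]
    [MulAction G X] [ContinuousConstSMul G X]
    (hfree : ∀ (g : G) (x : X), g • x = x → g = 1) :
    ({C : Set (doublePointSet G (X := X)) | ∃ z, C = connectedComponent z}
        = {C | ∃ g : G, g ≠ 1 ∧ C = gammaComponent g}) ∧
    (∀ g₁ g₂ : G, g₁ ≠ 1 → g₂ ≠ 1 →
        gammaComponent (X := X) g₁ = gammaComponent g₂ → g₁ = g₂) ∧
    (∀ g : G, tauSwap '' gammaComponent (X := X) g = gammaComponent g⁻¹) ∧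
    (∀ g : G, g ≠ 1 →
        (tauSwap '' gammaComponent (X := X) g = gammaComponent g ↔ g ^ 2 = 1)) := by
  have := isCancelSMul_iff_eq_one_of_smul_eq.mpr hfree
  have hq : IsQuotientCoveringMap (Quotient.mk (MulAction.orbitRel G X)) G :=
    isQuotientCoveringMap_of_finite isQuotientMap_quotient_mk' Quotient.eq''
  have ⟨hcomp, hinj, hswap, hinv⟩ := components_of_double_point_set_of_free_action_general hq
  exact ⟨hcomp, fun _ _ _ _ h => hinj h, hswap, fun g _ => hinv g⟩
end
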